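/- arXiv:1111.5901 — 2 statements merged into one kernel-verified Lean document; each statement's English description precedes it below -/
import Mathlib

section
/- There exists a built-in permutation π = (πₙ)ₙ∈ℕ, where each πₙ is a permutation of {0,...,n}, such that: (i) there is a single first-order formula over the language with a binary relation symbol for < and a binary relation symbol for the graph of π which, evaluated in the structure with universe {0,...,n}, < restricted to {0,...,n}, and the relation {(i,j) : πₙ(i) = j}, defines Bit restricted to {0,...,n}, for every n; and (ii) there is a single first-order formula over the language with one binary relation symbol for Bit which, evaluated in the finite prefix structure ({0,...,n}, Bit), defines the relation {(i,j) : πₙ(i) = j}, for every n. -/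
open FirstOrder Language


/-- Relation symbols of the language with a single binary relation `Bit`. -/
inductive BitRel : ℕ → Type
  | bit : BitRel 2

/-- The language with a single binary relation symbol for `Bit`. -/
def LBit : Language := ⟨fun _ => Empty, BitRel⟩

/-- The finite prefix structure `({0,...,n}, Bit)`. -/
def bitStruct (n : ℕ) : LBit.Structure (Fin (n + 1)) where
  funMap := fun f _ => f.elim
  RelMap := fun r v =>
    match r with
    | .bit => Nat.testBit (v 0 : ℕ) (v 1 : ℕ) = true

/-- Relation symbols of a language with two binary relation symbols:
one for `<` and one for the graph of a permutation. -/
inductive PermRel : ℕ → Type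
  | lt : PermRel 2
  | perm : PermRel 2

/-- The language with binary relation symbols for `<` and for the graph of a
built-in permutation. -/
def LPerm : Language := ⟨fun _ => Empty, PermRel⟩

/-- The structure `({0,...,n}, <, graph of πₙ)` for a built-in permutation `π`. -/
def permStruct (π : (n : ℕ) → Equiv.Perm (Fin (n + 1))) (n : ℕ) :
    LPerm.Structure (Fin (n + 1)) where
  funMap := fun f _ => f.elim
  RelMap := fun r v =>
    match r with
    | .lt => (v 0 : ℕ) < (v 1 : ℕ)
    | .perm => π n (v 0) = v 1


/-! ### Uniform definability -/

/-- Uniform definability (for all `n ≥ N`) of a family of relations on `{0,...,n}`. -/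
def Df {L : FirstOrder.Language.{0,0}} (S : ∀ n, L.Structure (Fin (n + 1))) (N : ℕ) {α : Type}
    (P : ∀ _ : ℕ, (α → ℕ) → Prop) : Prop :=
  ∃ φ : L.Formula α, ∀ n, N ≤ n → ∀ v : α → Fin (n + 1),
    @Formula.Realize L (Fin (n + 1)) (S n) α φ v ↔ P n (fun a => (v a : ℕ))

section
variable {L : FirstOrder.Language.{0,0}} {S : ∀ n, L.Structure (Fin (n + 1))} {N : ℕ} {α β : Type}

theorem Df.congr {P Q : ∀ _ : ℕ, (α → ℕ) → Prop} (h : Df S N P)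
    (e : ∀ n, N ≤ n → ∀ v : α → ℕ, (∀ a, v a ≤ n) → (P n v ↔ Q n v)) : Df S N Q := by
  obtain ⟨φ, hφ⟩ := h
  exact ⟨φ, fun n hn v => (hφ n hn v).trans (e n hn _ fun a => Nat.lt_succ_iff.1 (v a).2)⟩

theorem Df.mono {P : ∀ _ : ℕ, (α → ℕ) → Prop} {N' : ℕ} (h : Df S N P) (hN : N ≤ N') :
    Df S N' P := by
  obtain ⟨φ, hφ⟩ := h
  exact ⟨φ, fun n hn v => hφ n (hN.trans hn) v⟩

theorem Df.not {P : ∀ _ : ℕ, (α → ℕ) → Prop} (h : Df S N P) :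
    Df S N (fun n v => ¬ P n v) := by
  obtain ⟨φ, hφ⟩ := h
  exact ⟨φ.not, fun n hn v => by rw [Formula.realize_not, hφ n hn]⟩

theorem Df.imp {P Q : ∀ _ : ℕ, (α → ℕ) → Prop} (h : Df S N P) (h' : Df S N Q) :
    Df S N (fun n v => P n v → Q n v) := by
  obtain ⟨φ, hφ⟩ := h
  obtain ⟨ψ, hψ⟩ := h'
  exact ⟨φ.imp ψ, fun n hn v => by rw [Formula.realize_imp, hφ n hn, hψ n hn]⟩

theorem Df.and {P Q : ∀ _ : ℕ, (α → ℕ) → Prop} (h : Df S N P) (h' : Df S N Q) :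
    Df S N (fun n v => P n v ∧ Q n v) :=
  (h.imp h'.not).not.congr fun n _ v _ => by tauto

theorem Df.or {P Q : ∀ _ : ℕ, (α → ℕ) → Prop} (h : Df S N P) (h' : Df S N Q) :
    Df S N (fun n v => P n v ∨ Q n v) :=
  (h.not.imp h').congr fun n _ v _ => by tauto

theorem Df.iff {P Q : ∀ _ : ℕ, (α → ℕ) → Prop} (h : Df S N P) (h' : Df S N Q) :
    Df S N (fun n v => (P n v ↔ Q n v)) :=
  ((h.imp h').and (h'.imp h)).congr fun n _ v _ => by tauto

theorem Df.false : Df S N (fun _ (_ : α → ℕ) => False) :=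
  ⟨⊥, fun n _ v => by simp⟩

theorem Df.eq (a b : α) : Df S N (fun _ v => v a = v b) :=
  ⟨Term.equal (Term.var a) (Term.var b), fun n _ v => by
    simp [Formula.realize_equal, Fin.ext_iff]⟩

theorem Df.relabel {P : ∀ _ : ℕ, (α → ℕ) → Prop} (h : Df S N P) (g : α → β) :
    Df S N (fun n v => P n (fun a => v (g a))) := by
  obtain ⟨φ, hφ⟩ := h
  exact ⟨φ.relabel g, fun n hn v => by
    rw [Formula.realize_relabel, hφ n hn]; rfl⟩

theorem Df.ex {R : ∀ _ : ℕ, (α → ℕ) → ℕ → Prop}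
    (h : Df S N (α := Option α) (fun n v => R n (fun a => v (some a)) (v none))) :
    Df S N (fun n v => ∃ x ≤ n, R n v x) := by
  obtain ⟨φ, hφ⟩ := h.relabel (β := α ⊕ Unit) (fun o => o.elim (Sum.inr ()) Sum.inl)
  refine ⟨φ.iExs Unit, fun n hn v => ?_⟩
  rw [Formula.realize_iExs]
  constructor
  · rintro ⟨i, hi⟩
    rw [hφ n hn] at hi
    exact ⟨i (), Nat.lt_succ_iff.1 (i ()).2, hi⟩
  · rintro ⟨x, hx, hr⟩
    refine ⟨fun _ => ⟨x, Nat.lt_succ_iff.2 hx⟩, ?_⟩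
    rw [hφ n hn]
    exact hr

theorem Df.all {R : ∀ _ : ℕ, (α → ℕ) → ℕ → Prop}
    (h : Df S N (α := Option α) (fun n v => R n (fun a => v (some a)) (v none))) :
    Df S N (fun n v => ∀ x ≤ n, R n v x) :=
  (Df.ex (R := fun n v x => ¬ R n v x) h.not).not.congr fun n _ v _ => by
    push Not; rfl

/-- Uniform definability of a unary relation. -/
def Df1 (S : ∀ n, L.Structure (Fin (n + 1))) (N : ℕ) (R : ℕ → ℕ → Prop) : Prop :=
  ∀ ⦃α : Type⦄ (a : α), Df S N (fun n v => R n (v a))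

/-- Uniform definability of a binary relation. -/
def Df2 (S : ∀ n, L.Structure (Fin (n + 1))) (N : ℕ) (R : ℕ → ℕ → ℕ → Prop) : Prop :=
  ∀ ⦃α : Type⦄ (a b : α), Df S N (fun n v => R n (v a) (v b))

/-- Uniform definability of a ternary relation. -/
def Df3 (S : ∀ n, L.Structure (Fin (n + 1))) (N : ℕ) (R : ℕ → ℕ → ℕ → ℕ → Prop) : Prop :=
  ∀ ⦃α : Type⦄ (a b c : α), Df S N (fun n v => R n (v a) (v b) (v c))

theorem Df1.congr {P Q : ℕ → ℕ → Prop} (h : Df1 S N P)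
    (e : ∀ n, N ≤ n → ∀ x ≤ n, (P n x ↔ Q n x)) : Df1 S N Q :=
  fun _ a => (h a).congr fun n hn _ hv => e n hn _ (hv a)

theorem Df2.congr {P Q : ℕ → ℕ → ℕ → Prop} (h : Df2 S N P)
    (e : ∀ n, N ≤ n → ∀ x ≤ n, ∀ y ≤ n, (P n x y ↔ Q n x y)) : Df2 S N Q :=
  fun _ a b => (h a b).congr fun n hn _ hv => e n hn _ (hv a) _ (hv b)

theorem Df3.congr {P Q : ℕ → ℕ → ℕ → ℕ → Prop} (h : Df3 S N P)
    (e : ∀ n, N ≤ n → ∀ x ≤ n, ∀ y ≤ n, ∀ z ≤ n, (P n x y z ↔ Q n x y z)) : Df3 S N Q :=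
  fun _ a b c => (h a b c).congr fun n hn _ hv => e n hn _ (hv a) _ (hv b) _ (hv c)

theorem Df2.mono {N' : ℕ} {R : ℕ → ℕ → ℕ → Prop} (h : Df2 S N R) (hN : N ≤ N') : Df2 S N' R :=
  fun _ a b => (h a b).mono hN

/-! ### Consequences of having the order -/

theorem df_succ (hlt : Df2 S N (fun _ x y => x < y)) : Df2 S N (fun _ x y => y = x + 1) := by
  have h : Df2 S N (fun n x y => x < y ∧ ∀ z ≤ n, ¬ (x < z ∧ z < y)) := by
    intro α a b
    apply_rules [Df.and, Df.all, Df.not, hlt]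
  refine h.congr fun n _ x hx y hy => ⟨fun ⟨h1, h2⟩ => ?_, ?_⟩
  · by_contra hne
    exact h2 (x + 1) (by omega) (by omega)
  · rintro rfl
    exact ⟨by omega, fun z _ => by omega⟩

theorem df_const (hlt : Df2 S N (fun _ x y => x < y)) (k : ℕ) : Df1 S N (fun _ x => x = k) := by
  induction k with
  | zero =>
    have h : Df1 S N (fun n x => ∀ z ≤ n, ¬ z < x) := by
      intro α a
      apply_rules [Df.all, Df.not, hlt]
    refine h.congr fun n _ x hx => ⟨fun h => ?_, ?_⟩
    · have := h 0 (by omega); omega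
    · rintro rfl z _; omega
  | succ k ih =>
    have h : Df1 S N (fun n x => ∃ z ≤ n, z = k ∧ x = z + 1) := by
      intro α a
      have hs := df_succ hlt
      apply_rules [Df.ex, Df.and, ih, hs]
    refine h.congr fun n _ x hx => ⟨?_, ?_⟩
    · rintro ⟨z, _, rfl, rfl⟩; rfl
    · rintro rfl
      exact ⟨k, by omega, rfl, rfl⟩

theorem df_size (hlt : Df2 S N (fun _ x y => x < y)) (k : ℕ) :
    Df S N (fun n (_ : α → ℕ) => n = k) := by
  have h : Df S N (fun n (_ : α → ℕ) => ∃ x ≤ n, x = k ∧ ∀ y ≤ n, ¬ x < y) := by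
    have hc := df_const hlt k
    refine Df.ex (Df.and (hc none) (Df.all (Df.not ?_)))
    exact hlt (some none) none
  refine h.congr fun n _ v _ => ⟨?_, ?_⟩
  · rintro ⟨x, hx, hxk, hm⟩
    have := hm n le_rfl
    omega
  · rintro rfl
    exact ⟨n, le_rfl, rfl, fun y _ => by omega⟩

theorem df_exlt {P : ℕ → ∀ _ : ℕ, (α → ℕ) → Prop} (h : ∀ k, Df S N (P k)) (B : ℕ) :
    Df S N (fun n v => ∃ k < B, P k n v) := by
  induction B with
  | zero => exact Df.false.congr fun n _ v _ => by simp
  | succ B ih =>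
    refine (ih.or (h B)).congr fun n _ v _ => ?_
    rw [Nat.exists_lt_succ_right]

theorem df_fixed (p : Prop) : Df S N (fun _ (_ : α → ℕ) => p) := by
  by_cases hp : p
  · exact Df.false.not.congr fun n _ v _ => by simp [hp]
  · exact Df.false.congr fun n _ v _ => by simp [hp]

/-- Finitely many universes can be patched. -/
theorem df_patch (hlt : Df2 S 0 (fun _ x y => x < y)) {R : ℕ → ℕ → ℕ → Prop}
    (h : Df2 S N R) : Df2 S 0 R := by
  intro α a b
  obtain ⟨φ, hφ⟩ := h (α := α) a b
  have h1 : Df S 0 (fun n (v : α → ℕ) => ∃ k < N, n = k ∧ ∃ x < N, v a = x ∧ ∃ y < N, v b = y ∧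
      R k x y) :=
    df_exlt (fun k => (df_size hlt k).and (df_exlt (fun x => (df_const hlt x a).and
      (df_exlt (fun y => (df_const hlt y b).and (df_fixed _)) N)) N)) N
  have h2 : Df S 0 (fun n (_ : α → ℕ) => ∃ k < N, n = k) :=
    df_exlt (fun k => df_size hlt k) N
  obtain ⟨ψ, hψ⟩ := h1
  obtain ⟨χ, hχ⟩ := h2
  refine ⟨ψ ⊔ (χ.not ⊓ φ), fun n _ v => ?_⟩
  let _ := S n
  rw [Formula.realize_sup, Formula.realize_inf, Formula.realize_not, hψ n (Nat.zero_le _) v,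
    hχ n (Nat.zero_le _) v]
  have ha := (v a).2
  have hb := (v b).2
  by_cases hn : N ≤ n
  · rw [hφ n hn v]
    constructor
    · rintro (⟨k, hk, rfl, -⟩ | h)
      · omega
      · exact h.2
    · intro h
      exact Or.inr ⟨fun ⟨k, hk, e⟩ => by omega, h⟩
  · constructor
    · rintro (⟨k, hk, rfl, x, hx, rfl, y, hy, rfl, h⟩ | h)
      · exact h
      · exact absurd ⟨n, by omega, rfl⟩ h.1
    · intro h
      exact Or.inl ⟨n, by omega, rfl, (v a : ℕ), by omega, rfl, (v b : ℕ), by omega, rfl, h⟩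

end

/-! ### The order is definable from `Bit` -/

/-- Membership in the Ackermann sense. -/
abbrev bt (a i : ℕ) : Prop := Nat.testBit a i = true

theorem lt_iff_bt {i j : ℕ} :
    i < j ↔ ∃ d, bt j d ∧ ¬ bt i d ∧ ∀ e, d < e → (bt i e ↔ bt j e) := by
  constructor
  · intro h
    have hx : i ^^^ j ≠ 0 := by
      intro h0
      rw [Nat.xor_eq_zero_iff] at h0
      omega
    obtain ⟨d, hd, hd'⟩ := Nat.exists_most_significant_bit hx
    have he : ∀ e, d < e → i.testBit e = j.testBit e := by
      intro e hde
      have := hd' e hde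
      rw [Nat.testBit_xor] at this
      simpa using this
    rw [Nat.testBit_xor] at hd
    have hjd : j.testBit d = true := by
      by_contra hj
      have hj' : j.testBit d = false := by simpa using hj
      have hi : i.testBit d = true := by simpa [hj'] using hd
      have := Nat.lt_of_testBit d hj' hi (fun e hde => (he e hde).symm)
      omega
    refine ⟨d, hjd, ?_, fun e hde => ?_⟩
    · simpa [bt, hjd] using hd
    · simp [bt, he e hde]
  · rintro ⟨d, h1, h2, h3⟩
    refine Nat.lt_of_testBit d (by simpa using h2) h1 fun e hde => ?_
    exact Bool.eq_iff_iff.2 (h3 e hde)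

theorem bt_le {a i : ℕ} (h : bt a i) : 2 ^ i ≤ a := Nat.ge_two_pow_of_testBit h

theorem bt_lt {a i : ℕ} (h : bt a i) : i < a := Nat.lt_two_pow_self.trans_le (bt_le h)

/-- Positions of bits of elements of `{0,...,n}`. -/
def idx1 (n i : ℕ) : Prop := ∃ a ≤ n, bt a i

/-- Positions of bits of positions. -/
def idx2 (n t : ℕ) : Prop := ∃ i ≤ n, idx1 n i ∧ bt i t

/-- The preorder coded by `W`. -/
def pre (n W i j : ℕ) : Prop := ∃ w ≤ n, bt W w ∧ bt w i ∧ ¬ bt w j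

/-- Comparison at the highest difference with respect to `r`. -/
def cmpB (r : ℕ → ℕ → Prop) (n i j : ℕ) : Prop :=
  ∃ d ≤ n, bt j d ∧ ¬ bt i d ∧ ∀ e ≤ n, r d e → (bt i e ↔ bt j e)

/-- `W` codes the correct order. -/
def valid (n W : ℕ) : Prop :=
  ∀ i ≤ n, ∀ j ≤ n, idx2 n i → idx2 n j → (pre n W i j ↔ cmpB (pre n W) n i j)

theorem idx1_iff {n i : ℕ} : idx1 n i ↔ 2 ^ i ≤ n := by
  constructor
  · rintro ⟨a, ha, h⟩; exact (bt_le h).trans ha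
  · intro h; exact ⟨2 ^ i, h, by simp [bt]⟩

theorem idx2_iff {n t : ℕ} : idx2 n t ↔ 2 ^ (2 ^ t) ≤ n := by
  constructor
  · rintro ⟨i, hi, h1, h2⟩
    rw [idx1_iff] at h1
    exact (Nat.pow_le_pow_right (by norm_num) (bt_le h2)).trans h1
  · intro h
    exact ⟨2 ^ t, Nat.lt_two_pow_self.le.trans h, idx1_iff.2 h, by simp [bt]⟩

/-- `cmpB` with a relation correct on the positions of bits of `i` and `j` is the order. -/
theorem cmpB_correct {r : ℕ → ℕ → Prop} {n i j : ℕ} (hi : i ≤ n) (hj : j ≤ n)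
    (h : ∀ d e, bt j d → (bt i e ∨ bt j e) → (r d e ↔ d < e)) :
    cmpB r n i j ↔ i < j := by
  rw [lt_iff_bt]
  constructor
  · rintro ⟨d, hd, h1, h2, h3⟩
    refine ⟨d, h1, h2, fun e hde => ?_⟩
    by_cases he : bt i e ∨ bt j e
    · refine h3 e ?_ ((h d e h1 he).2 hde)
      rcases he with he | he
      · exact (bt_lt he).le.trans hi
      · exact (bt_lt he).le.trans hj
    · tauto
  · rintro ⟨d, h1, h2, h3⟩
    refine ⟨d, (bt_lt h1).le.trans hj, h1, h2, fun e he hde => ?_⟩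
    by_cases he : bt i e ∨ bt j e
    · exact h3 e ((h d e h1 he).1 hde)
    · tauto

theorem idx2_down {n t s : ℕ} (h : idx2 n t) (hs : s ≤ t) : idx2 n s := by
  rw [idx2_iff] at *
  exact (Nat.pow_le_pow_right (by norm_num) (Nat.pow_le_pow_right (by norm_num) hs)).trans h

theorem idx2_le {n t : ℕ} (h : idx2 n t) : t ≤ n := by
  rw [idx2_iff] at h
  have h1 : t < 2 ^ t := Nat.lt_two_pow_self
  have h2 : 2 ^ t < 2 ^ 2 ^ t := Nat.lt_two_pow_self
  omega

theorem valid_correct {n W : ℕ} (hW : valid n W) :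
    ∀ K i j, i < K → j < K → idx2 n i → idx2 n j → (pre n W i j ↔ i < j) := by
  intro K
  induction K with
  | zero => intro i j hi; omega
  | succ K ih =>
    intro i j hi hj h1 h2
    rw [hW i (idx2_le h1) j (idx2_le h2) h1 h2]
    refine cmpB_correct (idx2_le h1) (idx2_le h2) fun d e hd he => ?_
    have hd' := bt_lt hd
    have he' : e < K ∧ idx2 n e := by
      rcases he with he | he
      · have := bt_lt he
        exact ⟨by omega, idx2_down h1 this.le⟩
      · have := bt_lt he
        exact ⟨by omega, idx2_down h2 this.le⟩
    exact ih d e (by omega) he'.1 (idx2_down h2 hd'.le) he'.2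

theorem valid_exists {n t : ℕ} (ht : idx2 n t) : ∃ W ≤ n, valid n W := by
  classical
  -- the code of the set of all `2 ^ s - 1` which are smaller than `log n`
  let M := Nat.log 2 n
  have hn : n ≠ 0 := by
    rw [idx2_iff] at ht
    have : 0 < 2 ^ 2 ^ t := by positivity
    omega
  let W := Nat.ofBits (fun i : Fin M => decide (∃ s, (i : ℕ) = 2 ^ s - 1))
  have hWM : W < 2 ^ M := Nat.ofBits_lt_two_pow _
  have hMn : 2 ^ M ≤ n := Nat.pow_log_le_self 2 hn
  have hW : ∀ w, bt W w ↔ w < M ∧ ∃ s, w = 2 ^ s - 1 := by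
    intro w
    simp only [bt, W, Nat.testBit_ofBits]
    split_ifs with h
    · simp [h]
    · simp [h]
  have hlt : ∀ i j, idx2 n i → idx2 n j → (pre n W i j ↔ i < j) := by
    intro i j hi hj
    constructor
    · rintro ⟨w, hw, h1, h2, h3⟩
      obtain ⟨-, s, rfl⟩ := (hW w).1 h1
      simp only [bt, Nat.testBit_two_pow_sub_one, decide_eq_true_eq] at h2 h3
      omega
    · intro hij
      rw [idx2_iff] at hj
      have hj' : 2 ^ j ≤ M := Nat.le_log_of_pow_le (by norm_num) hj
      have hp : 0 < 2 ^ j := by positivity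
      have hMlt : M < 2 ^ M := Nat.lt_two_pow_self
      refine ⟨2 ^ j - 1, by omega, (hW _).2 ⟨by omega, j, rfl⟩, ?_, ?_⟩
      · simpa [bt] using hij
      · simp [bt]
  refine ⟨W, by omega, fun i hi j hj h1 h2 => ?_⟩
  rw [hlt i j h1 h2, cmpB_correct hi hj]
  intro d e hd he
  refine hlt d e (idx2_down h2 (bt_lt hd).le) ?_
  rcases he with he | he
  · exact idx2_down h1 (bt_lt he).le
  · exact idx2_down h2 (bt_lt he).le

theorem df_bit : Df2 bitStruct 0 (fun _ x y => bt x y) := by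
  intro α a b
  let r : LBit.Relations 2 := BitRel.bit
  refine ⟨r.formula₂ (Term.var a) (Term.var b), fun n _ v => ?_⟩
  let _ := bitStruct n
  rw [Formula.realize_rel₂]
  rfl

theorem df_cmpB {r : ℕ → ℕ → ℕ → Prop} (h : Df2 bitStruct 0 r) :
    Df2 bitStruct 0 (fun n i j => cmpB (r n) n i j) := by
  intro α a b
  unfold cmpB
  have hb := df_bit
  apply_rules [Df.ex, Df.all, Df.and, Df.not, Df.imp, Df.iff, hb]

theorem df_idx1 : Df1 bitStruct 0 idx1 := by
  intro α a
  unfold idx1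
  have hb := df_bit
  apply_rules [Df.ex, Df.and]

theorem df_lt_bit : Df2 bitStruct 0 (fun _ x y => x < y) := by
  have hb := df_bit
  have h1 := df_idx1
  have h2 : Df1 bitStruct 0 idx2 := by
    intro α a
    unfold idx2
    apply_rules [Df.ex, Df.and]
  have hpre : Df3 bitStruct 0 pre := by
    intro α a b c
    unfold pre
    apply_rules [Df.ex, Df.and, Df.not]
  have hvalid : Df1 bitStruct 0 valid := by
    intro α a
    unfold valid cmpB
    apply_rules [Df.ex, Df.all, Df.and, Df.not, Df.imp, Df.iff]
  have hlt2 : Df2 bitStruct 0 (fun n i j => ∃ W ≤ n, valid n W ∧ pre n W i j) := by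
    intro α a b
    apply_rules [Df.ex, Df.and]
  have e2 : ∀ n i j, idx2 n i → idx2 n j → ((∃ W ≤ n, valid n W ∧ pre n W i j) ↔ i < j) := by
    intro n i j hi hj
    constructor
    · rintro ⟨W, -, hW, h⟩
      exact (valid_correct hW (i + j + 1) i j (by omega) (by omega) hi hj).1 h
    · intro h
      obtain ⟨W, hWn, hW⟩ := valid_exists hi
      exact ⟨W, hWn, hW, (valid_correct hW (i + j + 1) i j (by omega) (by omega) hi hj).2 h⟩
  refine (df_cmpB (df_cmpB hlt2)).congr fun n _ x hx y hy => ?_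
  have key : ∀ a d, a ≤ n → bt a d → idx1 n d := fun a d ha hd => ⟨a, ha, hd⟩
  have key2 : ∀ a d, idx1 n a → bt a d → idx2 n d := fun a d ha hd => by
    refine ⟨a, ?_, ha, hd⟩
    rw [idx1_iff] at ha
    exact Nat.lt_two_pow_self.le.trans ha
  refine cmpB_correct hx hy fun d e hd he => ?_
  have hd1 : idx1 n d := key y d hy hd
  have he1 : idx1 n e := he.elim (key x e hx) (key y e hy)
  have le1 : ∀ i, idx1 n i → i ≤ n := fun i hi => by
    rw [idx1_iff] at hi
    exact Nat.lt_two_pow_self.le.trans hi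
  refine cmpB_correct (le1 d hd1) (le1 e he1) fun d' e' hd' he' => ?_
  exact e2 n d' e' (key2 e d' he1 hd') (he'.elim (key2 d e' hd1) (key2 e e' he1))

/-! ### Arithmetic preliminaries -/

/-- Carry into position `t` in the addition `x + y`. -/
def carry (x y t : ℕ) : Prop :=
  ∃ s < t, bt x s ∧ bt y s ∧ ∀ r, s < r → r < t → bt x r ∨ bt y r

theorem carry_succ (x y t : ℕ) :
    carry x y (t + 1) ↔ (bt x t ∧ bt y t) ∨ ((bt x t ∨ bt y t) ∧ carry x y t) := by
  constructor
  · rintro ⟨s, hs, h1, h2, h3⟩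
    rcases Nat.lt_succ_iff_lt_or_eq.1 hs with h | rfl
    · exact Or.inr ⟨h3 t h (by omega), s, h, h1, h2, fun r h4 h5 => h3 r h4 (by omega)⟩
    · exact Or.inl ⟨h1, h2⟩
  · rintro (⟨h1, h2⟩ | ⟨h, s, hs, h1, h2, h3⟩)
    · exact ⟨t, by omega, h1, h2, fun r _ _ => by omega⟩
    · refine ⟨s, by omega, h1, h2, fun r h4 h5 => ?_⟩
      rcases Nat.lt_succ_iff_lt_or_eq.1 h5 with h6 | rfl
      · exact h3 r h4 h6
      · exact h

theorem mod_pow_succ (x t : ℕ) :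
    x % 2 ^ (t + 1) = x % 2 ^ t + 2 ^ t * (x.testBit t).toNat := by
  rw [Nat.mod_pow_succ, Nat.toNat_testBit]

theorem carry_iff (x y t : ℕ) : carry x y t ↔ 2 ^ t ≤ x % 2 ^ t + y % 2 ^ t := by
  induction t with
  | zero =>
    constructor
    · rintro ⟨s, hs, -⟩; omega
    · intro h; simp [Nat.mod_one] at h
  | succ t ih =>
    rw [carry_succ, ih, mod_pow_succ, mod_pow_succ, pow_succ]
    have h1 : x % 2 ^ t < 2 ^ t := Nat.mod_lt _ (by positivity)
    have h2 : y % 2 ^ t < 2 ^ t := Nat.mod_lt _ (by positivity)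
    generalize x % 2 ^ t = X at *
    generalize y % 2 ^ t = Y at *
    generalize 2 ^ t = P at *
    simp only [bt]
    cases x.testBit t <;> cases y.testBit t <;> simp <;> omega

theorem add_bit (x y t : ℕ) :
    bt (x + y) t ↔ ((bt x t ↔ bt y t) ↔ carry x y t) := by
  rw [carry_iff]
  have hx := mod_pow_succ x t
  have hy := mod_pow_succ y t
  have hz := mod_pow_succ (x + y) t
  rw [Nat.add_mod, hx, hy, Nat.add_mod x y (2 ^ t), pow_succ] at hz
  have h1 : x % 2 ^ t < 2 ^ t := Nat.mod_lt _ (by positivity)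
  have h2 : y % 2 ^ t < 2 ^ t := Nat.mod_lt _ (by positivity)
  generalize x % 2 ^ t = X at *
  generalize y % 2 ^ t = Y at *
  generalize 2 ^ t = P at *
  have h3 : (X + Y) % P = if X + Y < P then X + Y else X + Y - P := by
    split_ifs with h
    · exact Nat.mod_eq_of_lt h
    · rw [Nat.mod_eq_sub_mod (by omega), Nat.mod_eq_of_lt (by omega)]
  have h4 : ∀ Z, Z < 4 * P → Z % (P * 2) = if Z < P * 2 then Z else Z - P * 2 := by
    intro Z hZ
    split_ifs with h
    · exact Nat.mod_eq_of_lt h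
    · rw [Nat.mod_eq_sub_mod (by omega), Nat.mod_eq_of_lt (by omega)]
  simp only [bt]
  rw [h3] at hz
  cases hbx : x.testBit t <;> cases hby : y.testBit t <;> cases hbz : (x + y).testBit t <;>
    simp only [hbx, hby, hbz, Bool.toNat_true, Bool.toNat_false, mul_zero, mul_one, add_zero] at hz <;>
    rw [h4 _ (by omega)] at hz <;> simp <;> split_ifs at hz <;> omega

theorem eq_iff_bt {n x y : ℕ} (hx : x < 2 ^ (n + 1)) (hy : y < 2 ^ (n + 1)) :
    x = y ↔ ∀ t ≤ n, (bt x t ↔ bt y t) := by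
  constructor
  · rintro rfl t _; rfl
  · intro h
    refine Nat.eq_of_testBit_eq fun t => ?_
    by_cases ht : t ≤ n
    · exact Bool.eq_iff_iff.2 (h t ht)
    · have : 2 ^ (n + 1) ≤ 2 ^ t := Nat.pow_le_pow_right (by norm_num) (by omega)
      rw [Nat.testBit_lt_two_pow (by omega), Nat.testBit_lt_two_pow (by omega)]

theorem two_mul_lt_pow {n x : ℕ} (hx : x ≤ 2 * n) : x < 2 ^ (n + 1) := by
  have : n < 2 ^ n := Nat.lt_two_pow_self
  rw [pow_succ]; omega

/-- Reversal of the lowest `m` bits. -/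
def rev (m y : ℕ) : ℕ := Nat.ofBits (fun i : Fin m => y.testBit (m - 1 - i))

theorem rev_bit (m y i : ℕ) : bt (rev m y) i ↔ i < m ∧ bt y (m - 1 - i) := by
  simp only [bt, rev, Nat.testBit_ofBits]
  split_ifs with h <;> simp [h]

theorem rev_lt (m y : ℕ) : rev m y < 2 ^ m := Nat.ofBits_lt_two_pow _

theorem eq_of_bt {x y : ℕ} (h : ∀ t, bt x t ↔ bt y t) : x = y :=
  Nat.eq_of_testBit_eq fun t => Bool.eq_iff_iff.2 (h t)

theorem bt_mod (x m t : ℕ) : bt (x % 2 ^ m) t ↔ t < m ∧ bt x t := by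
  simp [bt, Nat.testBit_mod_two_pow]

theorem rev_rev (m y : ℕ) : rev m (rev m y) = y % 2 ^ m := by
  refine eq_of_bt fun t => ?_
  rw [rev_bit, rev_bit, bt_mod]
  constructor
  · rintro ⟨h1, h2, h3⟩
    exact ⟨h1, by rwa [show m - 1 - (m - 1 - t) = t by omega] at h3⟩
  · rintro ⟨h1, h3⟩
    exact ⟨h1, by omega, by rwa [show m - 1 - (m - 1 - t) = t by omega]⟩

theorem rev_mod (m y : ℕ) : rev m (y % 2 ^ m) = rev m y := by
  rw [← rev_rev, rev_rev, Nat.mod_eq_of_lt (rev_lt _ _)]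

/-- The exceptional pairs. -/
def Exc (m i w : ℕ) : Prop := 1 ≤ i ∧ i ≤ m ∧ w + 2 ^ i = 2 ^ (m + 1)

theorem Exc.lt {m i w : ℕ} (h : Exc m i w) : i < 2 ^ m ∧ 2 ^ m ≤ w ∧ w < 2 ^ (m + 1) := by
  obtain ⟨h1, h2, h3⟩ := h
  have : m < 2 ^ m := Nat.lt_two_pow_self
  have h4 : 2 ^ i ≤ 2 ^ m := Nat.pow_le_pow_right (by norm_num) h2
  have : 0 < 2 ^ i := by positivity
  rw [pow_succ] at *
  omega

theorem Exc.inj {m i j w : ℕ} (h : Exc m i w) (h' : Exc m j w) : i = j := by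
  have h3 := h.2.2
  have h4 := h'.2.2
  exact Nat.pow_right_injective (le_refl 2) (show 2 ^ i = 2 ^ j by omega)

theorem Exc.inj' {m i w w' : ℕ} (h : Exc m i w) (h' : Exc m i w') : w = w' := by
  have h3 := h.2.2
  have h4 := h'.2.2
  omega

theorem Exc.ex {m i : ℕ} (h1 : 1 ≤ i) (h2 : i ≤ m) : Exc m i (2 ^ (m + 1) - 2 ^ i) := by
  refine ⟨h1, h2, ?_⟩
  have h4 : 2 ^ i ≤ 2 ^ (m + 1) := Nat.pow_le_pow_right (by norm_num) (by omega)
  omega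

theorem Exc_bits (m i w n : ℕ) (hm : m ≤ n) (hw : w ≤ n) : Exc m i w ↔
    1 ≤ i ∧ i ≤ m ∧ ∀ t ≤ n, (bt w t ↔ i ≤ t ∧ t ≤ m) := by
  unfold Exc
  refine and_congr_right fun h1 => and_congr_right fun h2 => ?_
  have e : 2 ^ (m + 1) - 2 ^ i = (2 ^ (m + 1 - i) - 1) <<< i := by
    rw [Nat.shiftLeft_eq, Nat.sub_mul, ← pow_add, show m + 1 - i + i = m + 1 by omega, one_mul]
  have hb : ∀ t, bt (2 ^ (m + 1) - 2 ^ i) t ↔ i ≤ t ∧ t ≤ m := by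
    intro t
    rw [e]
    simp only [bt, Nat.testBit_shiftLeft, Nat.testBit_two_pow_sub_one, Bool.and_eq_true,
      decide_eq_true_eq]
    omega
  have hE := (Exc.ex h1 h2).2.2
  have hp : 0 < 2 ^ i := by positivity
  have hq : 2 ^ (m + 1) ≤ 2 ^ (n + 1) := Nat.pow_le_pow_right (by norm_num) (by omega)
  rw [show w + 2 ^ i = 2 ^ (m + 1) ↔ w = 2 ^ (m + 1) - 2 ^ i by omega,
    eq_iff_bt (n := n) (two_mul_lt_pow (by omega)) (by omega)]
  simp only [hb]

open Classical in
/-- The involution exchanging the exceptional pairs. -/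
noncomputable def sw (m u : ℕ) : ℕ :=
  if h : ∃ w, Exc m u w then h.choose else if h : ∃ i, Exc m i u then h.choose else u

theorem sw_iff (m u w : ℕ) : sw m u = w ↔
    Exc m u w ∨ Exc m w u ∨ (u = w ∧ (¬ ∃ z, Exc m u z) ∧ ¬ ∃ z, Exc m z u) := by
  unfold sw
  split_ifs with h h'
  · have hs := h.choose_spec
    constructor
    · rintro rfl; exact Or.inl hs
    · rintro (h1 | h1 | h1)
      · exact hs.inj' h1
      · have := hs.lt
        have := h1.lt
        omega
      · exact absurd h h1.2.1
  · have hs := h'.choose_spec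
    constructor
    · rintro rfl; exact Or.inr (Or.inl hs)
    · rintro (h1 | h1 | h1)
      · exact absurd ⟨w, h1⟩ h
      · exact hs.inj h1
      · exact absurd h' h1.2.2
  · constructor
    · rintro rfl; exact Or.inr (Or.inr ⟨rfl, h, h'⟩)
    · rintro (h1 | h1 | h1)
      · exact absurd ⟨w, h1⟩ h
      · exact absurd ⟨w, h1⟩ h'
      · exact h1.1

theorem sw_sw (m u : ℕ) : sw m (sw m u) = u := by
  rw [sw_iff]
  have h := (sw_iff m u (sw m u)).1 rfl
  rcases h with h | h | ⟨h, h1, h2⟩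
  · exact Or.inr (Or.inl h)
  · exact Or.inl h
  · rw [← h]; exact Or.inr (Or.inr ⟨rfl, h1, h2⟩)

/-! ### The permutation -/

/-- Number of low bits. -/
def mm (n : ℕ) : ℕ := Nat.log 2 n - 1

theorem mm_spec {n : ℕ} (hn : 4 ≤ n) : 1 ≤ mm n ∧ 2 * 2 ^ mm n ≤ n ∧ n < 4 * 2 ^ mm n ∧
    mm n + 1 = Nat.log 2 n := by
  have h1 : 2 ≤ Nat.log 2 n := Nat.le_log_of_pow_le (by norm_num) (by omega)
  have h2 : 2 ^ Nat.log 2 n ≤ n := Nat.pow_log_le_self 2 (by omega)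
  have h3 : n < 2 ^ (Nat.log 2 n + 1) := Nat.lt_pow_succ_log_self (by norm_num) n
  obtain ⟨k, hk⟩ : ∃ k, Nat.log 2 n = k + 1 := ⟨Nat.log 2 n - 1, by omega⟩
  have hm : mm n = k := by unfold mm; omega
  rw [hm]
  rw [hk] at h1 h2 h3 ⊢
  simp only [pow_succ] at h2 h3
  omega

/-- The cyclic part of the permutation. -/
def cc (n x : ℕ) : ℕ := if x + 2 ^ mm n ≤ n then x + 2 ^ mm n else rev (mm n) x

/-- The permutation, as a function on numbers. -/
noncomputable def ff (n x : ℕ) : ℕ := if 4 ≤ n then sw (mm n) (cc n x) else x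

theorem cc_le {n x : ℕ} (hn : 4 ≤ n) : cc n x ≤ n := by
  have := mm_spec hn
  have := rev_lt (mm n) x
  unfold cc
  split_ifs <;> omega

theorem sw_le {n u : ℕ} (hn : 4 ≤ n) (hu : u ≤ n) : sw (mm n) u ≤ n := by
  have := mm_spec hn
  rcases (sw_iff (mm n) u (sw (mm n) u)).1 rfl with h | h | ⟨h, h1, h2⟩
  · have := h.lt
    rw [pow_succ] at this
    omega
  · have := h.lt
    omega
  · omega

theorem ff_le {n x : ℕ} (hx : x ≤ n) : ff n x ≤ n := by
  unfold ff
  split_ifs with h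
  · exact sw_le h (cc_le h)
  · exact hx

theorem cc_inj {n x y : ℕ} (hn : 4 ≤ n) (hx : x ≤ n) (hy : y ≤ n) (h : cc n x = cc n y) :
    x = y := by
  have h1 := mm_spec hn
  have h2 := rev_lt (mm n) x
  have h3 := rev_lt (mm n) y
  unfold cc at h
  split_ifs at h with h4 h5 h5
  · omega
  · omega
  · omega
  · have h6 := congrArg (rev (mm n)) h
    rw [rev_rev, rev_rev] at h6
    have hx' := Nat.div_add_mod x (2 ^ mm n)
    have hy' := Nat.div_add_mod y (2 ^ mm n)
    have hlx := Nat.mod_lt x (show 0 < 2 ^ mm n by positivity)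
    rcases lt_trichotomy (x / 2 ^ mm n) (y / 2 ^ mm n) with h7 | h7 | h7
    · have : 2 ^ mm n * (x / 2 ^ mm n + 1) ≤ 2 ^ mm n * (y / 2 ^ mm n) := Nat.mul_le_mul_left _ h7
      rw [mul_add, mul_one] at this
      omega
    · rw [h7] at hx'; omega
    · have : 2 ^ mm n * (y / 2 ^ mm n + 1) ≤ 2 ^ mm n * (x / 2 ^ mm n) := Nat.mul_le_mul_left _ h7
      rw [mul_add, mul_one] at this
      omega

theorem ff_inj {n x y : ℕ} (hx : x ≤ n) (hy : y ≤ n) (h : ff n x = ff n y) : x = y := by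
  unfold ff at h
  split_ifs at h with h4
  · have := congrArg (sw (mm n)) h
    rw [sw_sw, sw_sw] at this
    exact cc_inj h4 hx hy this
  · exact h

/-- The built-in permutation. -/
noncomputable def pp (n : ℕ) : Equiv.Perm (Fin (n + 1)) :=
  Equiv.ofBijective (fun x => ⟨ff n x, Nat.lt_succ_iff.2 (ff_le (Nat.lt_succ_iff.1 x.2))⟩) <| by
    rw [← Finite.injective_iff_bijective]
    intro x y h
    exact Fin.ext (ff_inj (Nat.lt_succ_iff.1 x.2) (Nat.lt_succ_iff.1 y.2) (Fin.ext_iff.1 h))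

theorem pp_iff (n : ℕ) (a b : Fin (n + 1)) : pp n a = b ↔ ff n a = b := by
  rw [Fin.ext_iff]; rfl

/-! ### The permutation is definable from `Bit` -/

theorem df_le {L : FirstOrder.Language.{0,0}} {S : ∀ n, L.Structure (Fin (n + 1))} {N : ℕ}
    (hlt : Df2 S N (fun _ x y => x < y)) : Df2 S N (fun _ x y => x ≤ y) := by
  have h : Df2 S N (fun _ x y => ¬ y < x) := fun α a b => (hlt b a).not
  exact h.congr fun n _ x _ y _ => not_lt

theorem Df1.mono {L : FirstOrder.Language.{0,0}} {S : ∀ n, L.Structure (Fin (n + 1))} {N N' : ℕ}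
    {R : ℕ → ℕ → Prop} (h : Df1 S N R) (hN : N ≤ N') : Df1 S N' R :=
  fun _ a => (h a).mono hN

theorem df_carry : Df3 bitStruct 4 (fun _ x y t => carry x y t) := by
  have hlt := df_lt_bit.mono (Nat.zero_le 4)
  have hb := df_bit.mono (Nat.zero_le 4)
  have h : Df3 bitStruct 4 (fun n x y t => ∃ s ≤ n, s < t ∧ bt x s ∧ bt y s ∧
      ∀ r ≤ n, s < r → r < t → bt x r ∨ bt y r) := by
    intro α a b c
    apply_rules [Df.ex, Df.all, Df.and, Df.or, Df.imp]
  refine h.congr fun n _ x hx y hy t ht => ⟨?_, ?_⟩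
  · rintro ⟨s, -, h1, h2, h3, h4⟩
    exact ⟨s, h1, h2, h3, fun r h5 h6 => h4 r (by omega) h5 h6⟩
  · rintro ⟨s, h1, h2, h3, h4⟩
    exact ⟨s, by omega, h1, h2, h3, fun r _ => h4 r⟩

theorem df_add : Df3 bitStruct 4 (fun _ x y z => x + y = z) := by
  have hb := df_bit.mono (Nat.zero_le 4)
  have hc := df_carry
  have h : Df3 bitStruct 4 (fun n x y z => ∀ t ≤ n,
      (((bt x t ↔ bt y t) ↔ carry x y t) ↔ bt z t)) := by
    intro α a b c
    apply_rules [Df.all, Df.iff]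
  refine h.congr fun n _ x hx y hy z hz => ?_
  rw [eq_iff_bt (n := n) (two_mul_lt_pow (by omega)) (two_mul_lt_pow (by omega))]
  simp only [add_bit]

theorem df_mm : Df1 bitStruct 4 (fun n x => x = mm n) := by
  have hlt := df_lt_bit.mono (Nat.zero_le 4)
  have hs := df_succ hlt
  have hi := df_idx1.mono (Nat.zero_le 4)
  have h : Df1 bitStruct 4 (fun n x => ∃ y ≤ n, y = x + 1 ∧ idx1 n y ∧
      ∀ z ≤ n, y < z → ¬ idx1 n z) := by
    intro α a
    apply_rules [Df.ex, Df.all, Df.and, Df.not, Df.imp]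
  refine h.congr fun n hn x hx => ?_
  simp only [idx1_iff, ← Nat.le_log_iff_pow_le (by norm_num : 1 < 2) (by omega : n ≠ 0)]
  have hm := mm_spec hn
  have hl : Nat.log 2 n < n := Nat.log_lt_self 2 (by omega)
  constructor
  · rintro ⟨y, h1, rfl, h3, h4⟩
    have := h4 (Nat.log 2 n) hl.le
    omega
  · rintro rfl
    exact ⟨_, by omega, rfl, by omega, fun z _ hz => by omega⟩

theorem df_TT : Df1 bitStruct 4 (fun n x => x = 2 ^ mm n) := by
  have hb := df_bit.mono (Nat.zero_le 4)
  have hm := df_mm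
  have h : Df1 bitStruct 4 (fun n x => ∀ t ≤ n, (t = mm n ↔ bt x t)) := by
    intro α a
    apply_rules [Df.all, Df.iff]
  refine h.congr fun n hn x hx => ?_
  have hm := mm_spec hn
  rw [eq_comm, eq_iff_bt (n := n) (two_mul_lt_pow (by omega)) (two_mul_lt_pow (by omega))]
  simp only [bt, Nat.testBit_two_pow, decide_eq_true_eq, @eq_comm ℕ (mm n)]

theorem df_rev : Df2 bitStruct 4 (fun n x y => rev (mm n) x = y) := by
  have hlt := df_lt_bit.mono (Nat.zero_le 4)
  have hs := df_succ hlt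
  have hb := df_bit.mono (Nat.zero_le 4)
  have ha := df_add
  have hm := df_mm
  have h : Df2 bitStruct 4 (fun n x y => ∀ t ≤ n, ((∃ j ≤ n, ∃ k ≤ n, ∃ m ≤ n,
      m = mm n ∧ m = k + 1 ∧ t + j = k ∧ bt x j) ↔ bt y t)) := by
    intro α a b
    apply_rules [Df.all, Df.ex, Df.and, Df.iff]
  refine h.congr fun n hn x hx y hy => ?_
  have hm := mm_spec hn
  have hr := rev_lt (mm n) x
  have hmn : mm n < 2 ^ mm n := Nat.lt_two_pow_self
  rw [eq_iff_bt (n := n) (two_mul_lt_pow (by omega)) (two_mul_lt_pow (by omega))]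
  refine forall_congr' fun t => imp_congr_right fun ht => iff_congr ?_ Iff.rfl
  rw [rev_bit]
  constructor
  · rintro ⟨j, _, k, _, m, _, rfl, h1, h2, h3⟩
    exact ⟨by omega, by rwa [show mm n - 1 - t = j by omega]⟩
  · rintro ⟨h1, h2⟩
    exact ⟨_, by omega, mm n - 1, by omega, mm n, by omega, rfl, by omega, by omega, h2⟩

theorem df_cc : Df2 bitStruct 4 (fun n x y => cc n x = y) := by
  have hr := df_rev
  have ha := df_add
  have hT := df_TT
  have h : Df2 bitStruct 4 (fun n x y => ∃ t ≤ n, t = 2 ^ mm n ∧ (x + t = y ∨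
      ((¬ ∃ z ≤ n, x + t = z) ∧ rev (mm n) x = y))) := by
    intro α a b
    apply_rules [Df.ex, Df.and, Df.or, Df.not]
  refine h.congr fun n hn x hx y hy => ?_
  have hm := mm_spec hn
  unfold cc
  constructor
  · rintro ⟨t, ht, rfl, h | ⟨h1, h2⟩⟩
    · rw [if_pos (by omega)]; exact h
    · rw [if_neg]
      · exact h2
      · intro h; exact h1 ⟨_, h, rfl⟩
  · intro h
    refine ⟨_, by omega, rfl, ?_⟩
    split_ifs at h with h1
    · exact Or.inl h
    · refine Or.inr ⟨?_, h⟩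
      rintro ⟨z, hz, rfl⟩
      exact h1 hz

theorem df_Exc : Df2 bitStruct 4 (fun n x y => Exc (mm n) x y) := by
  have hlt := df_lt_bit.mono (Nat.zero_le 4)
  have hle := df_le hlt
  have hb := df_bit.mono (Nat.zero_le 4)
  have hm := df_mm
  have h0 := df_const hlt 1
  have h : Df2 bitStruct 4 (fun n x y => ∃ o ≤ n, ∃ m ≤ n, o = 1 ∧ m = mm n ∧
      o ≤ x ∧ x ≤ m ∧ ∀ t ≤ n, (bt y t ↔ x ≤ t ∧ t ≤ m)) := by
    intro α a b
    apply_rules [Df.ex, Df.all, Df.and, Df.iff]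
  refine h.congr fun n hn x hx y hy => ?_
  have hm := mm_spec hn
  have hmn : mm n < 2 ^ mm n := Nat.lt_two_pow_self
  rw [Exc_bits (mm n) x y n (by omega) hy]
  constructor
  · rintro ⟨o, _, m, _, rfl, rfl, h⟩
    exact h
  · intro h
    exact ⟨1, by omega, mm n, by omega, rfl, rfl, h⟩

theorem df_sw : Df2 bitStruct 4 (fun n x y => sw (mm n) x = y) := by
  have hE := df_Exc
  have h : Df2 bitStruct 4 (fun n x y => Exc (mm n) x y ∨ Exc (mm n) y x ∨
      (x = y ∧ (¬ ∃ z ≤ n, Exc (mm n) x z) ∧ ¬ ∃ z ≤ n, Exc (mm n) z x)) := by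
    intro α a b
    apply_rules [Df.ex, Df.and, Df.or, Df.not, Df.eq]
  refine h.congr fun n hn x hx y hy => ?_
  rw [sw_iff]
  have hm := mm_spec hn
  have key : ∀ i w, Exc (mm n) i w → i ≤ n ∧ w ≤ n := by
    intro i w h
    have := h.lt
    rw [pow_succ] at this
    omega
  have e1 : (∃ z ≤ n, Exc (mm n) x z) ↔ ∃ z, Exc (mm n) x z :=
    ⟨fun ⟨z, _, h⟩ => ⟨z, h⟩, fun ⟨z, h⟩ => ⟨z, (key _ _ h).2, h⟩⟩
  have e2 : (∃ z ≤ n, Exc (mm n) z x) ↔ ∃ z, Exc (mm n) z x :=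
    ⟨fun ⟨z, _, h⟩ => ⟨z, h⟩, fun ⟨z, h⟩ => ⟨z, (key _ _ h).1, h⟩⟩
  rw [e1, e2]

theorem df_ff : Df2 bitStruct 0 (fun n x y => ff n x = y) := by
  have hs := df_sw
  have hc := df_cc
  have h : Df2 bitStruct 4 (fun n x y => ∃ u ≤ n, cc n x = u ∧ sw (mm n) u = y) := by
    intro α a b
    apply_rules [Df.ex, Df.and]
  refine df_patch df_lt_bit (h.congr fun n hn x hx y hy => ?_)
  unfold ff
  rw [if_pos hn]
  constructor
  · rintro ⟨u, _, rfl, h⟩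
    exact h
  · intro h
    exact ⟨_, cc_le hn, rfl, h⟩

/-! ### `Bit` is definable from the order and the permutation -/

theorem df_lt_perm (π : (n : ℕ) → Equiv.Perm (Fin (n + 1))) :
    Df2 (permStruct π) 0 (fun _ x y => x < y) := by
  intro α a b
  let r : LPerm.Relations 2 := PermRel.lt
  refine ⟨r.formula₂ (Term.var a) (Term.var b), fun n _ v => ?_⟩
  let _ := permStruct π n
  rw [Formula.realize_rel₂]
  rfl

theorem df_ff_perm : Df2 (permStruct pp) 0 (fun n x y => ff n x = y) := by
  intro α a b
  let r : LPerm.Relations 2 := PermRel.perm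
  refine ⟨r.formula₂ (Term.var a) (Term.var b), fun n _ v => ?_⟩
  let _ := permStruct pp n
  rw [Formula.realize_rel₂]
  exact pp_iff n (v a) (v b)

theorem cc_low {n x : ℕ} (hn : 4 ≤ n) (hx : x < 2 ^ mm n) : cc n x = x + 2 ^ mm n := by
  have := mm_spec hn
  unfold cc
  rw [if_pos (by omega)]

theorem cc_high {n x : ℕ} (hx : 2 ^ mm n ≤ x) : cc n x < 2 ^ mm n ∨ 2 * 2 ^ mm n ≤ cc n x := by
  have := rev_lt (mm n) x
  unfold cc
  split_ifs <;> omega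

theorem ff_eq {n : ℕ} (hn : 4 ≤ n) (x : ℕ) : ff n x = sw (mm n) (cc n x) := by
  unfold ff
  rw [if_pos hn]

theorem Exc.lt' {m i w : ℕ} (h : Exc m i w) : i < 2 ^ m ∧ 2 ^ m ≤ w ∧ w < 2 * 2 ^ m := by
  have := h.lt
  rw [pow_succ] at this
  omega

/-- A small argument is mapped to a small value exactly for exceptional arguments. -/
theorem ff_low_iff {n x i : ℕ} (hn : 4 ≤ n) (hx : x < 2 ^ mm n) (hi : i < 2 ^ mm n) :
    ff n x = i ↔ Exc (mm n) i (x + 2 ^ mm n) := by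
  rw [ff_eq hn, cc_low hn hx, sw_iff]
  constructor
  · rintro (h | h | ⟨h, -⟩)
    · have := h.lt'; omega
    · exact h
    · omega
  · exact fun h => Or.inr (Or.inl h)

theorem ff_low {n x : ℕ} (hn : 4 ≤ n) (hx : x < 2 ^ mm n) :
    ff n x = x + 2 ^ mm n ∨ (ff n x < 2 ^ mm n ∧ Exc (mm n) (ff n x) (x + 2 ^ mm n)) := by
  by_cases h : ff n x < 2 ^ mm n
  · exact Or.inr ⟨h, (ff_low_iff hn hx h).1 rfl⟩
  · left
    rw [ff_eq hn, cc_low hn hx] at *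
    rcases (sw_iff (mm n) (x + 2 ^ mm n) _).1 rfl with h1 | h1 | ⟨h1, -⟩
    · have := h1.lt'; omega
    · have := h1.lt'; omega
    · exact h1.symm

theorem Exc_even {m i w : ℕ} (h : Exc m i w) : w % 2 = 0 := by
  obtain ⟨h1, h2, h3⟩ := h
  obtain ⟨j, rfl⟩ : ∃ j, i = j + 1 := ⟨i - 1, by omega⟩
  rw [pow_succ, pow_succ] at h3
  omega

theorem TT_even {n : ℕ} (hn : 4 ≤ n) : 2 ^ mm n % 2 = 0 := by
  have := mm_spec hn
  obtain ⟨j, hj⟩ : ∃ j, mm n = j + 1 := ⟨mm n - 1, by omega⟩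
  rw [hj, pow_succ]
  omega

theorem ff_odd {n x : ℕ} (hn : 4 ≤ n) (hx : x < 2 ^ mm n) (ho : x % 2 = 1) :
    ff n x = x + 2 ^ mm n := by
  rcases ff_low hn hx with h | ⟨-, h⟩
  · exact h
  · have := Exc_even h
    have := TT_even hn
    omega

theorem df_TT' : Df1 (permStruct pp) 4 (fun n x => x = 2 ^ mm n) := by
  have hlt := (df_lt_perm pp).mono (Nat.zero_le 4)
  have hf := df_ff_perm.mono (Nat.zero_le 4)
  have hs := df_succ hlt
  have h1 := df_const hlt 1
  have h : Df1 (permStruct pp) 4 (fun n x => ∃ o ≤ n, ∃ u ≤ n, o = 1 ∧ ff n o = u ∧ u = x + 1) := by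
    intro α a
    apply_rules [Df.ex, Df.and]
  refine h.congr fun n hn x hx => ?_
  have hm := mm_spec hn
  have hT := TT_even hn
  have h1 : ff n 1 = 1 + 2 ^ mm n := ff_odd hn (by omega) rfl
  constructor
  · rintro ⟨o, _, u, _, rfl, rfl, h⟩
    omega
  · rintro rfl
    exact ⟨1, by omega, _, by omega, rfl, h1, by omega⟩

/-- Comparison with `2 ^ m`. -/
theorem df_ltT : Df1 (permStruct pp) 4 (fun n x => x < 2 ^ mm n) := by
  have hlt := (df_lt_perm pp).mono (Nat.zero_le 4)
  have hT := df_TT'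
  have h : Df1 (permStruct pp) 4 (fun n x => ∃ t ≤ n, t = 2 ^ mm n ∧ x < t) := by
    intro α a
    apply_rules [Df.ex, Df.and]
  refine h.congr fun n hn x hx => ?_
  have hm := mm_spec hn
  constructor
  · rintro ⟨t, _, rfl, h⟩; exact h
  · intro h; exact ⟨_, by omega, rfl, h⟩

theorem df_shift : Df2 (permStruct pp) 4 (fun n x y => x < 2 ^ mm n ∧ y = x + 2 ^ mm n) := by
  have hlt := (df_lt_perm pp).mono (Nat.zero_le 4)
  have hf := df_ff_perm.mono (Nat.zero_le 4)
  have hs := df_succ hlt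
  have hT := df_ltT
  have h : Df2 (permStruct pp) 4 (fun n x y => x < 2 ^ mm n ∧ ((¬ y < 2 ^ mm n ∧ ff n x = y) ∨
      ((∃ u ≤ n, u < 2 ^ mm n ∧ ff n x = u) ∧ ∃ x' ≤ n, ∃ u' ≤ n, x' = x + 1 ∧ u' = y + 1 ∧
        ff n x' = u'))) := by
    intro α a b
    apply_rules [Df.ex, Df.and, Df.or, Df.not]
  refine h.congr fun n hn x hx y hy => and_congr_right fun hxT => ?_
  have hm := mm_spec hn
  have hTe := TT_even hn
  rcases ff_low hn hxT with h | ⟨h1, h2⟩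
  · constructor
    · rintro (⟨h1, h2⟩ | ⟨⟨u, h3, h4, h5⟩, -⟩)
      · omega
      · omega
    · intro h1
      exact Or.inl ⟨by omega, by omega⟩
  · have he := Exc_even h2
    have ho := ff_odd hn (show x + 1 < 2 ^ mm n by omega) (by omega)
    constructor
    · rintro (⟨h3, h4⟩ | ⟨-, x', h3, u', h4, rfl, rfl, h5⟩)
      · omega
      · omega
    · intro h3
      exact Or.inr ⟨⟨_, by omega, h1, rfl⟩, x + 1, by omega, y + 1, by omega, rfl, rfl, by omega⟩

theorem df_cc' : Df2 (permStruct pp) 4 (fun n x y => cc n x = y) := by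
  have hf := df_ff_perm.mono (Nat.zero_le 4)
  have hT := df_ltT
  have hsh := df_shift
  have h : Df2 (permStruct pp) 4 (fun n x y => (x < 2 ^ mm n ∧ y = x + 2 ^ mm n) ∨
      (¬ x < 2 ^ mm n ∧ ((ff n x = y ∧ ¬ ∃ e ≤ n, (e < 2 ^ mm n ∧ y = e + 2 ^ mm n)) ∨
        ∃ e ≤ n, ∃ u ≤ n, (e < 2 ^ mm n ∧ u = e + 2 ^ mm n) ∧ ff n x = u ∧ ff n e = y ∧
          y < 2 ^ mm n))) := by
    intro α a b
    refine Df.or (hsh a b) (Df.and (hT a).not (Df.or (Df.and (hf a b) (Df.not (Df.ex ?_)))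
      (Df.ex (Df.ex (Df.and ?_ (Df.and ?_ (Df.and ?_ ?_)))))))
    · exact hsh none (some b)
    · exact hsh (some none) none
    · exact hf (some (some a)) none
    · exact hf (some none) (some (some b))
    · exact hT (some (some b))
  refine h.congr fun n hn x hx y hy => ?_
  have hm := mm_spec hn
  by_cases hxT : x < 2 ^ mm n
  · rw [cc_low hn hxT]
    constructor
    · rintro (h | h)
      · exact h.2.symm
      · exact absurd hxT h.1
    · intro h
      exact Or.inl ⟨hxT, h.symm⟩
  · have hz := cc_high (n := n) (x := x) (by omega)
    have hfx := ff_eq hn x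
    have hcn := cc_le (x := x) hn
    rcases (sw_iff (mm n) (cc n x) _).1 hfx.symm with h1 | h1 | ⟨h1, h2, h3⟩
    · have hl := h1.lt'
      constructor
      · rintro (h | ⟨-, ⟨h3, h4⟩ | ⟨e, he, u, hu, ⟨h3, rfl⟩, h4, h5, h6⟩⟩)
        · omega
        · exact absurd ⟨y - 2 ^ mm n, by omega, by omega, by omega⟩ h4
        · rw [ff_low_iff hn h3 h6, ← h4] at h5
          exact h1.inj h5
      · intro h
        refine Or.inr ⟨hxT, Or.inr ⟨ff n x - 2 ^ mm n, by omega, ff n x, by omega,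
          ⟨by omega, by omega⟩, rfl, ?_, by omega⟩⟩
        rw [ff_low_iff hn (by omega) (by omega), ← h, Nat.sub_add_cancel (by omega)]
        exact h1
    · have hl := h1.lt'
      exfalso
      clear h hfx h1
      omega
    · constructor
      · rintro (h | ⟨-, ⟨h3, h4⟩ | ⟨e, he, u, hu, ⟨h3, rfl⟩, h4, h5, h6⟩⟩)
        · omega
        · omega
        · omega
      · intro h
        refine Or.inr ⟨hxT, Or.inl ⟨by omega, ?_⟩⟩
        rintro ⟨e, _, h4, h5⟩
        omega

/-- Following the cycle until it becomes small. -/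
def hit (n : ℕ) : ℕ → ℕ → ℕ → Prop
  | 0, _, _ => False
  | k + 1, x, w => ∃ z ≤ n, cc n x = z ∧ ((z < 2 ^ mm n ∧ z = w) ∨ (¬ z < 2 ^ mm n ∧ hit n k z w))

theorem rev_add (m x : ℕ) : rev m (x + 2 ^ m) = rev m x := by
  rw [← rev_mod, Nat.add_mod_right, rev_mod]

theorem hit_iff {n : ℕ} (hn : 4 ≤ n) (k x w : ℕ) (hx : x ≤ n) (h : n < x + k * 2 ^ mm n) :
    hit n k x w ↔ rev (mm n) x = w := by
  induction k generalizing x with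
  | zero => omega
  | succ k ih =>
    unfold hit
    have hr := rev_lt (mm n) x
    have e : (∃ z ≤ n, cc n x = z ∧ ((z < 2 ^ mm n ∧ z = w) ∨ (¬ z < 2 ^ mm n ∧ hit n k z w))) ↔
        ((cc n x < 2 ^ mm n ∧ cc n x = w) ∨ (¬ cc n x < 2 ^ mm n ∧ hit n k (cc n x) w)) := by
      constructor
      · rintro ⟨z, _, rfl, h⟩; exact h
      · intro h; exact ⟨_, cc_le hn, rfl, h⟩
    rw [e]
    by_cases hs : x + 2 ^ mm n ≤ n
    · have hc : cc n x = x + 2 ^ mm n := by unfold cc; rw [if_pos hs]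
      rw [add_mul, one_mul] at h
      rw [hc, ih _ hs (by omega), rev_add]
      constructor
      · rintro (h | h)
        · omega
        · exact h.2
      · intro h
        exact Or.inr ⟨by omega, h⟩
    · have hc : cc n x = rev (mm n) x := by unfold cc; rw [if_neg hs]
      rw [hc]
      constructor
      · rintro (h | h)
        · exact h.2
        · exact absurd hr h.1
      · intro h
        exact Or.inl ⟨hr, h⟩

theorem df_hit (k : ℕ) : Df2 (permStruct pp) 4 (fun n x y => hit n k x y) := by
  have hc := df_cc'
  have hT := df_ltT
  induction k with
  | zero => exact fun α a b => Df.false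
  | succ k ih =>
    intro α a b
    unfold hit
    apply_rules [Df.ex, Df.and, Df.or, Df.not, Df.eq]

theorem df_rev' : Df2 (permStruct pp) 4 (fun n x y => rev (mm n) x = y) := by
  refine (df_hit 4).congr fun n hn x hx y hy => hit_iff hn 4 x y hx ?_
  have := mm_spec hn
  omega

theorem dvd_iff_bt (i x : ℕ) : 2 ^ i ∣ x ↔ ∀ t < i, ¬ bt x t := by
  rw [Nat.dvd_iff_mod_eq_zero]
  constructor
  · intro h t ht hb
    have := (bt_mod x i t).2 ⟨ht, hb⟩
    rw [h] at this
    simp [bt] at this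
  · intro h
    refine eq_of_bt fun t => ?_
    rw [bt_mod]
    simp only [bt, Nat.zero_testBit]
    constructor
    · rintro ⟨h1, h2⟩; exact absurd h2 (h t h1)
    · intro h; cases h

theorem dvd_iff_rev {m i e x : ℕ} (h : Exc m i (e + 2 ^ m)) :
    rev m x ≤ rev m e ↔ 2 ^ i ∣ x := by
  have hpm : 0 < 2 ^ m := by positivity
  have hb := (Exc_bits m i (e + 2 ^ m) (m + (e + 2 ^ m)) (by omega) (by omega)).1 h
  have hr : rev m e = 2 ^ (m - i) - 1 := by
    rw [← rev_add]
    refine eq_of_bt fun t => ?_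
    rw [rev_bit]
    simp only [bt, Nat.testBit_two_pow_sub_one, decide_eq_true_eq]
    constructor
    · rintro ⟨h1, h2⟩
      have := (hb.2.2 (m - 1 - t) (by omega)).1 h2
      omega
    · intro h1
      exact ⟨by omega, (hb.2.2 (m - 1 - t) (by omega)).2 (by omega)⟩
  have hp : 0 < 2 ^ (m - i) := by positivity
  have him := hb.2.1
  rw [hr, show rev m x ≤ 2 ^ (m - i) - 1 ↔ rev m x < 2 ^ (m - i) by omega, dvd_iff_bt]
  constructor
  · intro h1 t ht hx
    have h2 : bt (rev m x) (m - 1 - t) := by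
      rw [rev_bit]
      exact ⟨by omega, by rwa [show m - 1 - (m - 1 - t) = t by omega]⟩
    have h3 := bt_le h2
    have h4 : 2 ^ (m - i) ≤ 2 ^ (m - 1 - t) := Nat.pow_le_pow_right (by norm_num) (by omega)
    omega
  · intro h1
    refine Nat.lt_pow_two_of_testBit _ fun t ht => ?_
    by_contra h2
    have h3 : bt (rev m x) t := by simpa using h2
    rw [rev_bit] at h3
    exact h1 _ (by omega) h3.2

theorem df_idx' : Df1 (permStruct pp) 4 (fun n i => 1 ≤ i ∧ i ≤ mm n) := by
  have hf := df_ff_perm.mono (Nat.zero_le 4)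
  have hT := df_ltT
  have h : Df1 (permStruct pp) 4 (fun n i => ∃ e ≤ n, e < 2 ^ mm n ∧ i < 2 ^ mm n ∧ ff n e = i) := by
    intro α a
    apply_rules [Df.ex, Df.and]
  refine h.congr fun n hn i hi => ?_
  have hm := mm_spec hn
  constructor
  · rintro ⟨e, _, h1, h2, h3⟩
    have := (ff_low_iff hn h1 h2).1 h3
    exact ⟨this.1, this.2.1⟩
  · rintro ⟨h1, h2⟩
    have h3 := Exc.ex h1 h2
    have h4 := h3.lt'
    refine ⟨2 ^ (mm n + 1) - 2 ^ i - 2 ^ mm n, by omega, by omega, by omega, ?_⟩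
    rw [ff_low_iff hn (by omega) (by omega), Nat.sub_add_cancel (by omega)]
    exact h3

theorem df_mm' : Df1 (permStruct pp) 4 (fun n x => x = mm n + 1) := by
  have hlt := (df_lt_perm pp).mono (Nat.zero_le 4)
  have hs := df_succ hlt
  have hi := df_idx'
  have h : Df1 (permStruct pp) 4 (fun n x => (∃ z ≤ n, x = z + 1 ∧ (1 ≤ z ∧ z ≤ mm n)) ∧
      ¬ (1 ≤ x ∧ x ≤ mm n)) := by
    intro α a
    refine Df.and (Df.ex (Df.and ?_ ?_)) (hi a).not
    · exact hs none (some a)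
    · exact hi none
  refine h.congr fun n hn x hx => ?_
  have hm := mm_spec hn
  constructor
  · rintro ⟨⟨z, _, rfl, h⟩, h'⟩
    omega
  · rintro rfl
    exact ⟨⟨mm n, by omega, rfl, by omega⟩, by omega⟩

theorem df_dvd : Df2 (permStruct pp) 4 (fun _ i x => 2 ^ i ∣ x) := by
  have hlt := (df_lt_perm pp).mono (Nat.zero_le 4)
  have hle := df_le hlt
  have hf := df_ff_perm.mono (Nat.zero_le 4)
  have hT := df_TT'
  have hlT := df_ltT
  have h0 := df_const hlt 0
  have hr := df_rev'
  have hc := df_cc'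
  have hm := df_mm'
  have h : Df2 (permStruct pp) 4 (fun n i x => i = 0 ∨
      (∃ e ≤ n, e < 2 ^ mm n ∧ i < 2 ^ mm n ∧ ff n e = i ∧ ∃ u ≤ n, ∃ w ≤ n,
        rev (mm n) x = u ∧ rev (mm n) e = w ∧ u ≤ w) ∨
      (i = mm n + 1 ∧ (x = 0 ∨ ∃ t ≤ n, t = 2 ^ mm n ∧ cc n t = x)) ∨
      (∃ j ≤ n, j = mm n + 1 ∧ j < i ∧ x = 0)) := by
    intro α a b
    apply_rules [Df.ex, Df.and, Df.or]
  refine h.congr fun n hn i hi x hx => ?_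
  have hm := mm_spec hn
  have hmn : mm n < 2 ^ mm n := Nat.lt_two_pow_self
  have hT2 : cc n (2 ^ mm n) = 2 * 2 ^ mm n := by
    unfold cc
    rw [if_pos (by omega), two_mul]
  constructor
  · rintro (rfl | ⟨e, _, h1, h2, h3, u, _, w, _, rfl, rfl, h4⟩ |
      ⟨rfl, rfl | ⟨t, _, rfl, rfl⟩⟩ | ⟨j, _, rfl, _, rfl⟩)
    · simp
    · exact (dvd_iff_rev ((ff_low_iff hn h1 h2).1 h3)).1 h4
    · simp
    · rw [hT2, pow_succ, mul_comm]
    · simp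
  · intro h
    rcases Nat.eq_zero_or_pos i with h0 | h0
    · exact Or.inl h0
    right
    rcases Nat.lt_trichotomy i (mm n + 1) with h1 | h1 | h1
    · left
      have h3 := Exc.ex h0 (Nat.lt_succ_iff.1 h1)
      have h4 := h3.lt'
      have h5 : Exc (mm n) i (2 ^ (mm n + 1) - 2 ^ i - 2 ^ mm n + 2 ^ mm n) := by
        rw [Nat.sub_add_cancel (by omega)]
        exact h3
      have hr := rev_lt (mm n)
      refine ⟨2 ^ (mm n + 1) - 2 ^ i - 2 ^ mm n, by omega, by omega, by omega,
        (ff_low_iff hn (by omega) (by omega)).2 h5, _, ?_, _, ?_, rfl, rfl,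
        (dvd_iff_rev h5).2 h⟩
      · have := hr x
        omega
      · have := hr (2 ^ (mm n + 1) - 2 ^ i - 2 ^ mm n)
        omega
    · right; left
      refine ⟨h1, ?_⟩
      subst h1
      obtain ⟨k, rfl⟩ := h
      rw [pow_succ] at hx ⊢
      have hk : k < 2 := by
        by_contra hk
        have : 2 ^ mm n * 2 * 2 ≤ 2 ^ mm n * 2 * k := Nat.mul_le_mul_left _ (by omega)
        omega
      interval_cases k
      · left; simp
      · right; exact ⟨_, by omega, rfl, by omega⟩
    · right; right
      refine ⟨mm n + 1, by omega, rfl, h1, ?_⟩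
      refine Nat.eq_zero_of_dvd_of_lt h ?_
      have : 2 ^ (mm n + 2) ≤ 2 ^ i := Nat.pow_le_pow_right (by norm_num) (by omega)
      rw [pow_add] at this
      omega

theorem bt_iff_dvd (a i : ℕ) : bt a i ↔
    ∃ q ≤ a, 2 ^ i ∣ q ∧ ¬ 2 ^ (i + 1) ∣ q ∧ ∀ x, q < x → x ≤ a → ¬ 2 ^ i ∣ x := by
  have hp : 0 < 2 ^ i := by positivity
  have hb : bt a i ↔ ¬ 2 ∣ a / 2 ^ i := by
    simp only [bt, Nat.testBit_eq_decide_div_mod_eq, decide_eq_true_eq]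
    omega
  have hk : ∀ k, 2 ^ (i + 1) ∣ 2 ^ i * k ↔ 2 ∣ k := fun k => by
    rw [pow_succ, Nat.mul_dvd_mul_iff_left hp]
  rw [hb]
  constructor
  · intro h
    refine ⟨2 ^ i * (a / 2 ^ i), Nat.mul_div_le _ _, Dvd.intro _ rfl, by rwa [hk], ?_⟩
    rintro x h1 h2 ⟨k, rfl⟩
    have h3 : a / 2 ^ i < k := Nat.lt_of_mul_lt_mul_left h1
    have h4 : k ≤ a / 2 ^ i := (Nat.le_div_iff_mul_le hp).2 (by rwa [mul_comm])
    omega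
  · rintro ⟨q, h1, ⟨k, rfl⟩, h2, h3⟩
    rw [hk] at h2
    have h4 : k ≤ a / 2 ^ i := (Nat.le_div_iff_mul_le hp).2 (by rwa [mul_comm])
    have h5 : ¬ k < a / 2 ^ i := by
      intro h5
      exact h3 (2 ^ i * (a / 2 ^ i)) (Nat.mul_lt_mul_of_pos_left h5 hp) (Nat.mul_div_le _ _)
        (Dvd.intro _ rfl)
    rwa [show a / 2 ^ i = k by omega]

theorem df_bit' : Df2 (permStruct pp) 0 (fun _ x y => bt x y) := by
  have hlt := (df_lt_perm pp).mono (Nat.zero_le 4)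
  have hle := df_le hlt
  have hs := df_succ hlt
  have hd := df_dvd
  have h : Df2 (permStruct pp) 4 (fun n a i => ∃ q ≤ n, q ≤ a ∧ 2 ^ i ∣ q ∧
      (∃ j ≤ n, j = i + 1 ∧ ¬ 2 ^ j ∣ q) ∧ ∀ x ≤ n, q < x → x ≤ a → ¬ 2 ^ i ∣ x) := by
    intro α a b
    apply_rules [Df.ex, Df.all, Df.and, Df.not, Df.imp]
  refine df_patch (df_lt_perm pp) (h.congr fun n hn a ha i hi => ?_)
  constructor
  · rintro ⟨q, _, h1, h2, ⟨j, _, rfl, h3⟩, h4⟩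
    exact (bt_iff_dvd a i).2 ⟨q, h1, h2, h3, fun x h5 h6 => h4 x (by omega) h5 h6⟩
  · intro h
    have := bt_lt h
    obtain ⟨q, h1, h2, h3, h4⟩ := (bt_iff_dvd a i).1 h
    exact ⟨q, by omega, h1, h2, ⟨i + 1, by omega, rfl, h3⟩, fun x _ => h4 x⟩

/-- Corollary 5.3: there is a built-in permutation `π = (πₙ)ₙ` such
that (i) an `FO(<,π)`-formula defines `Bit` in `({0,...,n}, <, graph of πₙ)` for every
`n`, and (ii) an `FO(Bit)`-formula defines the graph of `πₙ` in `({0,...,n}, Bit)` for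
every `n`. -/
theorem builtin_permutation_captures_Bit :
    ∃ π : (n : ℕ) → Equiv.Perm (Fin (n + 1)),
      (∃ φ : LPerm.Formula (Fin 2),
        ∀ n : ℕ,
          letI := permStruct π n
          ∀ a b : Fin (n + 1),
            φ.Realize ![a, b] ↔ Nat.testBit (a : ℕ) (b : ℕ) = true) ∧
      (∃ ψ : LBit.Formula (Fin 2),
        ∀ n : ℕ,
          letI := bitStruct n
          ∀ a b : Fin (n + 1), ψ.Realize ![a, b] ↔ π n a = b) := by
  refine ⟨pp, ?_, ?_⟩
  · obtain ⟨φ, hφ⟩ := df_bit' (0 : Fin 2) 1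
    exact ⟨φ, fun n a b => hφ n (Nat.zero_le n) ![a, b]⟩
  · obtain ⟨ψ, hψ⟩ := df_ff (0 : Fin 2) 1
    exact ⟨ψ, fun n a b => (hψ n (Nat.zero_le n) ![a, b]).trans (pp_iff n a b).symm⟩
end

section
/- For all natural numbers x and y: r(x) = r(y) if and only if there is no z ∈ ℕ with r(z) = c(z) such that (x ◁ z and (z ◁ y or z = y)) or (y ◁ z and (z ◁ x or z = x)). (Two elements lie in the same row iff no diagonal element lies between them with respect to ◁.) -/
open FirstOrder Language

/-- `q_i = i(i+1)/2`, the smallest element of column `i`. -/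
def qseq (i : ℕ) : ℕ := i * (i + 1) / 2

/-- `c(x)`, the column number of `x`: the largest `i` with `q_i ≤ x`. -/
def col (x : ℕ) : ℕ := Nat.findGreatest (fun i => qseq i ≤ x) x

/-- `q(x) = q_{c(x)}`, the bottom-most element of the column of `x`. -/
def qf (x : ℕ) : ℕ := qseq (col x)

/-- `r(x) = x - q(x)`, the row number of `x`. -/
def rowf (x : ℕ) : ℕ := x - qf x

/-- The row-major linear order `◁`. -/
def ordc (x y : ℕ) : Prop := rowf x < rowf y ∨ (rowf x = rowf y ∧ col x < col y)

theorem qseq_succ' (i : ℕ) : qseq (i + 1) = qseq i + i + 1 := by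
  unfold qseq
  have : (i + 1) * (i + 1 + 1) = i * (i + 1) + (i + 1) * 2 := by ring
  rw [this, Nat.add_mul_div_right _ _ (by norm_num)]
  omega

theorem le_qseq (i : ℕ) : i ≤ qseq i := by
  induction i with
  | zero => simp
  | succ n ih => rw [qseq_succ']; omega

theorem qseq_col_le (x : ℕ) : qseq (col x) ≤ x := by
  unfold col
  exact Nat.findGreatest_spec (P := fun i => qseq i ≤ x) (Nat.zero_le x) (by simp [qseq])

theorem lt_qseq_col_succ (x : ℕ) : x < qseq (col x + 1) := by
  by_contra h
  push Not at h
  have h1 := le_qseq (col x + 1)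
  have h2 : col x + 1 ≤ col x :=
    Nat.le_findGreatest (P := fun i => qseq i ≤ x) (h1.trans h) h
  omega

theorem qseq_mono' : Monotone qseq :=
  monotone_nat_of_le_succ (fun n => by rw [qseq_succ']; omega)

theorem row_le_col (x : ℕ) : rowf x ≤ col x := by
  have h := lt_qseq_col_succ x
  rw [qseq_succ'] at h
  unfold rowf qf
  omega

theorem eq_q_add_row (x : ℕ) : x = qseq (col x) + rowf x := by
  have h := qseq_col_le x
  unfold rowf qf
  omega

theorem col_diag (r : ℕ) : col (qseq r + r) = r := by
  have h1 := qseq_col_le (qseq r + r)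
  have h2 := lt_qseq_col_succ (qseq r + r)
  rcases lt_trichotomy (col (qseq r + r)) r with h | h | h
  · have := qseq_mono' (show col (qseq r + r) + 1 ≤ r from h)
    omega
  · exact h
  · have := qseq_mono' (show r + 1 ≤ col (qseq r + r) from h)
    rw [qseq_succ'] at this
    omega

theorem row_diag (r : ℕ) : rowf (qseq r + r) = r := by
  unfold rowf qf
  rw [col_diag]
  omega

theorem diag_between (x y : ℕ) (h : rowf x < rowf y) :
    ∃ z : ℕ, rowf z = col z ∧ (ordc x z ∧ (ordc z y ∨ z = y)) := by
  refine ⟨qseq (rowf y) + rowf y, by rw [row_diag, col_diag], ?_, ?_⟩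
  · left; rw [row_diag]; exact h
  · rcases (row_le_col y).lt_or_eq with h1 | h1
    · left; right; rw [row_diag, col_diag]; exact ⟨rfl, h1⟩
    · right
      conv_rhs => rw [eq_q_add_row y, ← h1]

theorem no_diag (x y z : ℕ) (h : rowf x = rowf y) (hz : rowf z = col z) (h1 : ordc x z)
    (h2 : ordc z y ∨ z = y) : False := by
  have hx := row_le_col x
  have hy := row_le_col y
  unfold ordc at h1 h2
  rcases h2 with h2 | rfl <;> omega

/-- two elements lie in the same row iff no diagonal element lies
between them with respect to `◁`. -/
theorem samerow_iff_no_diag_between (x y : ℕ) :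
    rowf x = rowf y ↔
      ¬ ∃ z : ℕ, rowf z = col z ∧
        ((ordc x z ∧ (ordc z y ∨ z = y)) ∨ (ordc y z ∧ (ordc z x ∨ z = x))) := by
  constructor
  · rintro h ⟨z, hz, ⟨h1, h2⟩ | ⟨h1, h2⟩⟩
    · exact no_diag x y z h hz h1 h2
    · exact no_diag y x z h.symm hz h1 h2
  · intro h
    rcases lt_trichotomy (rowf x) (rowf y) with h1 | h1 | h1
    · obtain ⟨z, hz, hh⟩ := diag_between x y h1
      exact absurd ⟨z, hz, Or.inl hh⟩ h
    · exact h1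
    · obtain ⟨z, hz, hh⟩ := diag_between y x h1
      exact absurd ⟨z, hz, Or.inr hh⟩ h
end
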